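/- Let F ∈ ℝ^{m×m} and g ∈ ℝ^{m×1} with (F, g) controllable, let A ∈ ℝ^{n×n}, b ∈ ℝ^{n×1}, c ∈ ℝ^{1×n} with (A, b) controllable and (A, c) observable, and let h ∈ ℝ^{1×m} with h ≠ 0. Then there exists p ∈ ℝ such that the (m+n)-dimensional pair (M, q) is controllable, where M is the block lower-triangular matrix M = [[F, 0], [p·b·h, A − p·b·c]] and q = [g; 0] ∈ ℝ^{(m+n)×1}. (This is the induction step used to prove sufficiency in the structural controllability theorem for SISO networked relative coupling systems: a new subsystem A − p b c driven through the coupling p b h from an already-controllable part (F, g) can be made controllable by a suitable choice of the single coupling weight p.) -/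

import Mathlib

open Matrix
open scoped Kronecker

noncomputable section

/-- Kalman-matrix controllability of the pair `(M, Q)`. -/
def IsCtrb {R : Type*} [CommRing R] {ι κ : Type*} [Fintype ι] [Fintype κ] [DecidableEq ι]
    (M : Matrix ι ι R) (Q : Matrix ι κ R) : Prop :=
  (Matrix.of fun (i : ι) (jk : Fin (Fintype.card ι) × κ) =>
      (M ^ (jk.1 : ℕ) * Q) i jk.2).rank = Fintype.card ι

/-- Observability of `(M, c)`: controllability of `(Mᵀ, cᵀ)`. -/
def IsObsv {R : Type*} [CommRing R] {ι : Type*} [Fintype ι] [DecidableEq ι]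
    (M : Matrix ι ι R) (c : Matrix (Fin 1) ι R) : Prop :=
  IsCtrb Mᵀ cᵀ

/-- The weighted Laplacian of a digraph with edge set `E`:
`L(w)_{ij} = -w_{(j,i)}` for `i ≠ j` with `(j,i) ∈ E`, zero for other off-diagonal entries,
and diagonal entries making every row sum to zero. -/
def lapMat {R : Type*} [CommRing R] {N : ℕ} (E : Finset (Fin N × Fin N))
    (w : Fin N × Fin N → R) : Matrix (Fin N) (Fin N) R :=
  Matrix.of fun i j =>
    if i = j then ∑ k ∈ Finset.univ.filter (fun k => k ≠ i ∧ (k, i) ∈ E), w (k, i)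
    else if (j, i) ∈ E then -w (j, i) else 0

/-- The `N × |I_u|` matrix whose columns are the standard basis vectors `e_i`, `i ∈ I_u`. -/
def deltaMat {R : Type*} [CommRing R] {N : ℕ} (Iu : Finset (Fin N)) :
    Matrix (Fin N) {i // i ∈ Iu} R :=
  Matrix.of fun i j => if i = (j : Fin N) then 1 else 0

/-- Vertex `i` is reachable by a directed path (possibly of length zero) from a driving vertex. -/
def inputReachable {N : ℕ} (E : Finset (Fin N × Fin N)) (Iu : Finset (Fin N)) (i : Fin N) : Prop :=
  ∃ s ∈ Iu, Relation.ReflTransGen (fun a b => (a, b) ∈ E) s i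

/-!
Fix a weight `p ≠ 0` for which the cascade is not controllable. By the Hautus test over the
algebraic closure, some nonzero row `(x, y)` satisfies `y (A - p b c) = μ y`,
`x F + p (y b) h = μ x` and `x g = 0`. Controllability of `(F, g)` forces `y ≠ 0`, and then
controllability of `(A, b)` forces `y b ≠ 0`, so that, after rescaling `x`, the scalar `μ` is a
zero of the system `(F, g, h)`: `x (F - μ) = h` and `x g = 0` for some `x`.

Fewer than `m` scalars are zeros: from solutions at distinct zeros `μ₁, …, μ_d`, divided
differences produce a row `w` with `w (F - μ₁) ⋯ (F - μ_d) = h` and `w F ^ k g = 0` for `k < d`, and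
for `d = m` this gives `w = 0`, hence `h = 0`. Finally `μ` determines `p`: if `y` is a left
eigenvector of `A - p b c` and `w` a right eigenvector of `A - q b c`, both for `μ`, then
`(q - p) (y b) (c w) = 0`, where `y b ≠ 0` and `c w ≠ 0`. So at most `m` weights, counting `p = 0`,
are bad.
-/

open Polynomial

section Kalman

variable {K ι κ : Type*} [Field K] [Fintype ι] [DecidableEq ι]

/-- The Kalman matrix `[Q, M Q, …, M ^ (n - 1) Q]`, whose rank decides controllability of `(M, Q)`;
its columns are indexed by the pairs (exponent, column of `Q`). -/
def kalmanMat (M : Matrix ι ι K) (Q : Matrix ι κ K) : Matrix ι (Fin (Fintype.card ι) × κ) K :=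
  Matrix.of fun i jk => (M ^ (jk.1 : ℕ) * Q) i jk.2

theorem vecMul_kalmanMat_eq_zero_iff {M : Matrix ι ι K} {Q : Matrix ι κ K} {v : ι → K} :
    v ᵥ* kalmanMat M Q = 0 ↔ ∀ k < Fintype.card ι, v ᵥ* (M ^ k * Q) = 0 :=
  ⟨fun hv k hk => funext fun j => congrFun hv (⟨k, hk⟩, j),
    fun hv => funext fun jk => congrFun (hv jk.1 jk.1.2) jk.2⟩

theorem vecMul_aeval_mul_eq_zero {M : Matrix ι ι K} {Q : Matrix ι κ K} {v : ι → K} {d : ℕ}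
    (hv : ∀ k < d, v ᵥ* (M ^ k * Q) = 0) {f : K[X]} (hf : f.degree < d) :
    v ᵥ* (aeval M f * Q) = 0 := by
  rw [aeval_def, eval₂_eq_sum, Polynomial.sum, Matrix.sum_mul, vecMul_sum]
  refine Finset.sum_eq_zero fun k hk => ?_
  have hkd : k < d := by exact_mod_cast (le_degree_of_mem_supp k hk).trans_lt hf
  rw [← Algebra.smul_def, Matrix.smul_mul, vecMul_smul, hv k hkd, smul_zero]

theorem vecMul_pow_natDegree_mul_eq_zero {M : Matrix ι ι K} {Q : Matrix ι κ K} {v : ι → K}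
    {f : K[X]} (hf : f.Monic) (hv : ∀ k < f.natDegree, v ᵥ* (M ^ k * Q) = 0)
    (hvf : v ᵥ* (aeval M f * Q) = 0) : v ᵥ* (M ^ f.natDegree * Q) = 0 := by
  have hdeg : (X ^ f.natDegree - f : K[X]).degree < f.natDegree := by
    simpa using degree_sub_lt_left (p := X ^ f.natDegree) (q := f)
      (by rw [degree_X_pow, degree_eq_natDegree hf.ne_zero]) (pow_ne_zero _ X_ne_zero)
      (by rw [leadingCoeff_X_pow, hf.leadingCoeff])
  have hsub := vecMul_aeval_mul_eq_zero hv hdeg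
  rwa [map_sub, map_pow, aeval_X, Matrix.sub_mul, vecMul_sub, hvf, sub_zero] at hsub

theorem vecMul_pow_mul_eq_zero_of_lt_card {M : Matrix ι ι K} {Q : Matrix ι κ K} {v : ι → K}
    (hv : ∀ k < Fintype.card ι, v ᵥ* (M ^ k * Q) = 0) (k : ℕ) : v ᵥ* (M ^ k * Q) = 0 := by
  rw [pow_eq_aeval_mod_charpoly]
  refine vecMul_aeval_mul_eq_zero hv ?_
  rw [← M.charpoly_degree_eq_dim]
  exact degree_modByMonic_lt _ M.charpoly_monic

variable [Fintype κ]

theorem isCtrb_iff_linearIndependent_row {M : Matrix ι ι K} {Q : Matrix ι κ K} :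
    IsCtrb M Q ↔ LinearIndependent K (kalmanMat M Q).row := by
  rw [linearIndependent_iff_card_eq_finrank_span, Set.finrank, ← rank_eq_finrank_span_row]
  exact eq_comm

theorem isCtrb_iff_forall_lt_card {M : Matrix ι ι K} {Q : Matrix ι κ K} :
    IsCtrb M Q ↔ ∀ v : ι → K, (∀ k < Fintype.card ι, v ᵥ* (M ^ k * Q) = 0) → v = 0 := by
  simp only [isCtrb_iff_linearIndependent_row, ← vecMul_injective_iff,
    ← vecMul_kalmanMat_eq_zero_iff]
  exact injective_iff_map_eq_zero (kalmanMat M Q).vecMulLinear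

theorem isCtrb_map_algebraMap_iff {L : Type*} [Field L] [Algebra K L] {M : Matrix ι ι K}
    {Q : Matrix ι κ K} :
    IsCtrb (M.map (algebraMap K L)) (Q.map (algebraMap K L)) ↔ IsCtrb M Q := by
  have hrow : (kalmanMat (M.map (algebraMap K L)) (Q.map (algebraMap K L))).row =
      fun i => algebraMap K L ∘ (kalmanMat M Q).row i := by
    funext i jk
    simp only [kalmanMat, row, of_apply, ← Matrix.map_pow, ← Matrix.map_mul, map_apply,
      Function.comp_apply]
  rw [isCtrb_iff_linearIndependent_row, isCtrb_iff_linearIndependent_row, hrow,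
    linearIndependent_algebraMap_comp_iff]

theorem IsCtrb.eq_zero_of_vecMul_eq_smul {M : Matrix ι ι K} {Q : Matrix ι κ K} (hMQ : IsCtrb M Q)
    {v : ι → K} {μ : K} (hv : v ᵥ* M = μ • v) (hQ : v ᵥ* Q = 0) : v = 0 := by
  have hpow : ∀ k : ℕ, v ᵥ* (M ^ k * Q) = 0 := by
    intro k
    induction k with
    | zero => rwa [pow_zero, Matrix.one_mul]
    | succ k ih => rw [pow_succ', Matrix.mul_assoc, ← vecMul_vecMul, hv, smul_vecMul, ih, smul_zero]
  exact isCtrb_iff_forall_lt_card.1 hMQ v fun k _ => hpow k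

theorem IsCtrb.vecMul_ne_zero_of_feedback {M : Matrix ι ι K} {Q : Matrix ι κ K} (hMQ : IsCtrb M Q)
    {G : Matrix κ ι K} {v : ι → K} {μ : K} (hv : v ᵥ* (M - Q * G) = μ • v) (hv0 : v ≠ 0) :
    v ᵥ* Q ≠ 0 := by
  intro hQ
  refine hv0 (hMQ.eq_zero_of_vecMul_eq_smul (μ := μ) ?_ hQ)
  rw [← hv, vecMul_sub, ← vecMul_vecMul, hQ, zero_vecMul, sub_zero]

/-- The Hautus test: the rows annihilating all `M ^ k * Q` form an `M`-invariant subspace, which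
contains an eigenvector unless it is zero. -/
theorem isCtrb_of_forall_eigenvector [IsAlgClosed K] {M : Matrix ι ι K} {Q : Matrix ι κ K}
    (H : ∀ (v : ι → K) (μ : K), v ᵥ* M = μ • v → v ᵥ* Q = 0 → v = 0) : IsCtrb M Q := by
  rw [isCtrb_iff_forall_lt_card]
  let W : Submodule K (ι → K) := ⨅ k : ℕ, LinearMap.ker (M ^ k * Q).vecMulLinear
  have mem_W : ∀ {v}, v ∈ W ↔ ∀ k : ℕ, v ᵥ* (M ^ k * Q) = 0 := by simp [W, Submodule.mem_iInf]
  have W_invariant : ∀ v ∈ W, M.vecMulLinear v ∈ W := by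
    intro v hv
    rw [mem_W] at hv ⊢
    intro k
    rw [vecMulLinear_apply, vecMul_vecMul, ← Matrix.mul_assoc, ← pow_succ']
    exact hv (k + 1)
  intro v hv
  by_contra hv0
  have : Nontrivial W := Submodule.nontrivial_iff_ne_bot.2
    (Submodule.ne_bot_iff _ |>.2 ⟨v, mem_W.2 (vecMul_pow_mul_eq_zero_of_lt_card hv), hv0⟩)
  obtain ⟨μ, hμ⟩ := Module.End.exists_eigenvalue (M.vecMulLinear.restrict W_invariant)
  obtain ⟨w, hw⟩ := hμ.exists_hasEigenvector
  have hwQ : (w : ι → K) ᵥ* Q = 0 := by simpa using mem_W.1 w.2 0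
  exact hw.2 (Subtype.ext (H w μ (congrArg Subtype.val hw.apply_eq_smul) hwQ))

end Kalman

section Zeros

variable {K ι κ : Type*} [Field K] [Fintype ι]

/-- The zeros of the system with state matrix `F`, input matrix `g` and output row `r`: the scalars
`μ` for which some row `(x, -1)` annihilates the system pencil `[[F - μ, g], [r, 0]]`. -/
def systemZeros (F : Matrix ι ι K) (g : Matrix ι κ K) (r : ι → K) : Set K :=
  {μ | ∃ x : ι → K, x ᵥ* F = μ • x + r ∧ x ᵥ* g = 0}

variable {F : Matrix ι ι K} {g : Matrix ι κ K}

theorem mem_systemZeros_of_smul {r : ι → K} {μ a : K} (ha : a ≠ 0)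
    (hμ : μ ∈ systemZeros F g (a • r)) : μ ∈ systemZeros F g r := by
  obtain ⟨x, hx, hxg⟩ := hμ
  refine ⟨a⁻¹ • x, ?_, by rw [smul_vecMul, hxg, smul_zero]⟩
  rw [smul_vecMul, hx, smul_add, inv_smul_smul₀ ha, smul_comm]

/-- The witness is the divided difference of the solutions at `μ` and `ν`. -/
theorem mem_systemZeros_of_ne {r x : ι → K} {μ ν : K} (hμ : μ ∈ systemZeros F g r) (hμν : μ ≠ ν)
    (hx : x ᵥ* F = ν • x + r) (hxg : x ᵥ* g = 0) : μ ∈ systemZeros F g x := by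
  obtain ⟨z, hz, hzg⟩ := hμ
  refine mem_systemZeros_of_smul (sub_ne_zero.2 hμν) ⟨z - x, ?_, ?_⟩
  · rw [sub_vecMul, hz, hx]
    module
  · rw [sub_vecMul, hzg, hxg, sub_zero]

variable [DecidableEq ι]

theorem exists_vecMul_aeval_prod_eq (S : Finset K) {r : ι → K}
    (hS : (S : Set K) ⊆ systemZeros F g r) :
    ∃ w : ι → K, w ᵥ* aeval F (∏ μ ∈ S, (X - C μ)) = r ∧
      ∀ k < S.card, w ᵥ* (F ^ k * g) = 0 := by
  classical
  induction S using Finset.induction_on generalizing r with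
  | empty => exact ⟨r, by simp⟩
  | insert ν S hν ih =>
    rw [Finset.coe_insert, Set.insert_subset_iff] at hS
    obtain ⟨⟨x, hx, hxg⟩, hS⟩ := hS
    obtain ⟨w, hwx, hwg⟩ := ih fun μ hμ =>
      mem_systemZeros_of_ne (hS hμ) (ne_of_mem_of_not_mem hμ hν) hx hxg
    set f : K[X] := ∏ μ ∈ S, (X - C μ)
    have hf : f.Monic := monic_prod_X_sub_C id S
    have hf_natDegree : f.natDegree = S.card := natDegree_finsetProd_X_sub_C_eq_card S id
    have hw_card : w ᵥ* (F ^ S.card * g) = 0 := by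
      rw [← hf_natDegree] at hwg ⊢
      exact vecMul_pow_natDegree_mul_eq_zero hf hwg (by rw [← vecMul_vecMul, hwx, hxg])
    refine ⟨w, ?_, fun k hk => ?_⟩
    · rw [Finset.prod_insert hν, mul_comm, map_mul, ← vecMul_vecMul, hwx, map_sub, aeval_X, aeval_C,
        vecMul_sub, hx, Algebra.algebraMap_eq_smul_one, vecMul_smul, vecMul_one,
        add_sub_cancel_left]
    · rw [Finset.card_insert_of_notMem hν, Nat.lt_succ_iff_lt_or_eq] at hk
      rcases hk with hk | rfl
      exacts [hwg k hk, hw_card]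

theorem IsCtrb.encard_systemZeros_lt [Fintype κ] (hFg : IsCtrb F g) {r : ι → K} (hr : r ≠ 0) :
    (systemZeros F g r).encard < Fintype.card ι := by
  by_contra! hcard
  obtain ⟨T, hT, hT_card⟩ := Set.exists_subset_encard_eq hcard
  lift T to Finset K using Set.finite_of_encard_eq_coe hT_card
  rw [Set.encard_coe_eq_coe_finsetCard, Nat.cast_inj] at hT_card
  obtain ⟨w, hwr, hwg⟩ := exists_vecMul_aeval_prod_eq T hT
  have hw : w = 0 := isCtrb_iff_forall_lt_card.1 hFg w (hT_card ▸ hwg)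
  exact hr (by rw [← hwr, hw, zero_vecMul])

end Zeros

section OutputFeedback

variable {K ι : Type*} [Field K] [Fintype ι] [DecidableEq ι]
  {A : Matrix ι ι K} {b : Matrix ι (Fin 1) K} {c : Matrix (Fin 1) ι K}

theorem IsObsv.mulVec_ne_zero_of_feedback (hAc : IsObsv A c) {G : Matrix ι (Fin 1) K} {w : ι → K}
    {μ : K} (hw : (A - G * c) *ᵥ w = μ • w) (hw0 : w ≠ 0) : c *ᵥ w ≠ 0 := by
  rw [← vecMul_transpose] at hw ⊢
  rw [transpose_sub, transpose_mul] at hw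
  exact IsCtrb.vecMul_ne_zero_of_feedback hAc hw hw0

theorem IsObsv.map_algebraMap {L : Type*} [Field L] [Algebra K L] (hAc : IsObsv A c) :
    IsObsv (A.map (algebraMap K L)) (c.map (algebraMap K L)) := by
  rw [IsObsv, ← transpose_map, ← transpose_map]
  exact isCtrb_map_algebraMap_iff.2 hAc

theorem feedback_gain_eq_of_common_eigenvalue (hAb : IsCtrb A b) (hAc : IsObsv A c) {μ p q : K}
    {y w : ι → K} (hy : y ᵥ* (A - p • (b * c)) = μ • y) (hy0 : y ≠ 0)
    (hw : (A - q • (b * c)) *ᵥ w = μ • w) (hw0 : w ≠ 0) : p = q := by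
  have hyb : y ᵥ* b ≠ 0 := hAb.vecMul_ne_zero_of_feedback (by rwa [← Matrix.mul_smul] at hy) hy0
  have hcw : c *ᵥ w ≠ 0 := hAc.mulVec_ne_zero_of_feedback (by rwa [← Matrix.smul_mul] at hw) hw0
  have hybcw : (y ᵥ* b) ⬝ᵥ (c *ᵥ w) ≠ 0 := by
    rw [Function.ne_iff, Fin.exists_fin_one] at hyb hcw
    simpa [dotProduct] using And.intro hyb hcw
  have hdiff : (q - p) * ((y ᵥ* b) ⬝ᵥ (c *ᵥ w)) = 0 := calc
    (q - p) * ((y ᵥ* b) ⬝ᵥ (c *ᵥ w)) = y ⬝ᵥ ((q - p) • (b * c)) *ᵥ w := by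
      rw [← dotProduct_mulVec, mulVec_mulVec, smul_mulVec, dotProduct_smul, smul_eq_mul]
    _ = y ⬝ᵥ ((A - p • (b * c)) - (A - q • (b * c))) *ᵥ w := by
      rw [sub_sub_sub_cancel_left, sub_smul]
    _ = 0 := by
      rw [sub_mulVec, dotProduct_sub, dotProduct_mulVec, hy, hw, smul_dotProduct, dotProduct_smul,
        sub_self]
  exact (sub_eq_zero.1 ((mul_eq_zero.1 hdiff).resolve_right hybcw)).symm

theorem subsingleton_setOf_feedback_gain (hAb : IsCtrb A b) (hAc : IsObsv A c) (μ : K) :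
    {p : K | ∃ y ≠ 0, y ᵥ* (A - p • (b * c)) = μ • y}.Subsingleton := by
  rintro p ⟨y, hy0, hy⟩ q ⟨z, hz0, hz⟩
  have hdet : (A - q • (b * c) - μ • 1).det = 0 :=
    exists_vecMul_eq_zero_iff.1 ⟨z, hz0, by rw [vecMul_sub, hz, vecMul_smul, vecMul_one, sub_self]⟩
  obtain ⟨w, hw0, hw⟩ := exists_mulVec_eq_zero_iff.2 hdet
  rw [sub_mulVec, smul_mulVec, one_mulVec, sub_eq_zero] at hw
  exact feedback_gain_eq_of_common_eigenvalue hAb hAc hy hy0 hw hw0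

end OutputFeedback

section Cascade

variable {K ι κ σ : Type*} [Field K] {F : Matrix ι ι K} {g : Matrix ι κ K} {A : Matrix σ σ K}
  {b : Matrix σ (Fin 1) K} {c : Matrix (Fin 1) σ K} {h : Matrix (Fin 1) ι K}

/-- The state matrix of the cascade in which the output `h` of the system `F`, with coupling weight
`p`, drives the subsystem `(A, b, c)` under output feedback with gain `-p`. -/
def cascadeMat (F : Matrix ι ι K) (A : Matrix σ σ K) (b : Matrix σ (Fin 1) K)
    (c : Matrix (Fin 1) σ K) (h : Matrix (Fin 1) ι K) (p : K) : Matrix (ι ⊕ σ) (ι ⊕ σ) K :=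
  fromBlocks F 0 (p • (b * h)) (A - p • (b * c))

theorem cascadeMat_map_algebraMap (L : Type*) [Field L] [Algebra K L] (p : K) :
    (cascadeMat F A b c h p).map (algebraMap K L) =
      cascadeMat (F.map (algebraMap K L)) (A.map (algebraMap K L)) (b.map (algebraMap K L))
        (c.map (algebraMap K L)) (h.map (algebraMap K L)) (algebraMap K L p) := by
  ext (i | i) (j | j) <;> simp [cascadeMat, Matrix.mul_apply, -algebraMap_smul]

variable [Fintype ι] [DecidableEq ι] [Fintype κ] [Fintype σ] [DecidableEq σ]

theorem exists_mem_systemZeros_of_not_isCtrb_cascadeMat [IsAlgClosed K] (hFg : IsCtrb F g)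
    (hAb : IsCtrb A b) {p : K} (hp0 : p ≠ 0)
    (hp : ¬ IsCtrb (cascadeMat F A b c h p) (fromRows g (0 : Matrix σ κ K))) :
    ∃ μ ∈ systemZeros F g (h 0), ∃ y ≠ 0, y ᵥ* (A - p • (b * c)) = μ • y := by
  contrapose! hp
  refine isCtrb_of_forall_eigenvector fun v μ hv hvg => ?_
  obtain ⟨x, y, rfl⟩ : ∃ x y, v = Sum.elim x y := ⟨_, _, (Sum.elim_comp_inl_inr v).symm⟩
  have hx : x ᵥ* F + p • (y ᵥ* b ᵥ* h) = μ • x := by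
    funext i
    simpa [cascadeMat, vecMul_fromBlocks, vecMul_smul] using congrFun hv (Sum.inl i)
  have hy : y ᵥ* (A - p • (b * c)) = μ • y := by
    funext i
    simpa [cascadeMat, vecMul_fromBlocks] using congrFun hv (Sum.inr i)
  have hxg : x ᵥ* g = 0 := by simpa [vecMul_fromRows] using hvg
  have hy0 : y = 0 := by
    by_contra hy0
    have hyb : (y ᵥ* b) 0 ≠ 0 := by
      rw [← Matrix.mul_smul] at hy
      exact Fin.exists_fin_one.1 (Function.ne_iff.1 (hAb.vecMul_ne_zero_of_feedback hy hy0))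
    have hbh : y ᵥ* b ᵥ* h = (y ᵥ* b) 0 • h 0 := by
      funext i
      simp [vecMul, dotProduct]
    have hxF : x ᵥ* F = μ • x + (-(p * (y ᵥ* b) 0)) • h 0 := by
      rw [← hx, hbh]
      module
    have hcoeff : -(p * (y ᵥ* b) 0) ≠ 0 := neg_ne_zero.2 (mul_ne_zero hp0 hyb)
    exact hp μ (mem_systemZeros_of_smul hcoeff ⟨x, hxF, hxg⟩) y hy0 hy
  have hx0 : x = 0 := by
    refine hFg.eq_zero_of_vecMul_eq_smul (μ := μ) ?_ hxg
    rw [← hx, hy0, zero_vecMul, zero_vecMul, smul_zero, add_zero]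
  rw [hx0, hy0, Sum.elim_zero_zero]

theorem encard_setOf_not_isCtrb_cascadeMat_le [IsAlgClosed K] (hFg : IsCtrb F g) (hAb : IsCtrb A b)
    (hAc : IsObsv A c) (hh : h ≠ 0) :
    {p : K | ¬ IsCtrb (cascadeMat F A b c h p) (fromRows g (0 : Matrix σ κ K))}.encard ≤
      Fintype.card ι := by
  set bad := {p : K | ¬ IsCtrb (cascadeMat F A b c h p) (fromRows g (0 : Matrix σ κ K))}
  choose! μ hμ_zero hμ_eigen using fun p (hp : p ∈ bad \ {0}) =>
    exists_mem_systemZeros_of_not_isCtrb_cascadeMat hFg hAb hp.2 hp.1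
  have μ_injOn : Set.InjOn μ (bad \ {0}) := fun p hp q hq hpq =>
    subsingleton_setOf_feedback_gain hAb hAc (μ p) (hμ_eigen p hp) (hpq ▸ hμ_eigen q hq)
  have hh0 : h 0 ≠ 0 := fun h0 => hh (ext fun i j => by rw [Subsingleton.elim i 0, h0]; rfl)
  calc bad.encard ≤ (bad \ {0}).encard + 1 := by
        simpa using Set.encard_le_encard_sdiff_add_encard bad {0}
    _ ≤ (systemZeros F g (h 0)).encard + 1 :=
        add_le_add_left (Set.encard_le_encard_of_injOn hμ_zero μ_injOn) 1
    _ ≤ Fintype.card ι := Order.add_one_le_of_lt (hFg.encard_systemZeros_lt hh0)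

end Cascade

theorem stmt12_general {K ι κ σ : Type*} [Field K] [Fintype ι] [DecidableEq ι] [Fintype κ]
    [Fintype σ] [DecidableEq σ] (F : Matrix ι ι K) (g : Matrix ι κ K) (A : Matrix σ σ K)
    (b : Matrix σ (Fin 1) K) (c : Matrix (Fin 1) σ K) (h : Matrix (Fin 1) ι K)
    (hFg : IsCtrb F g) (hAb : IsCtrb A b) (hAc : IsObsv A c) (hh : h ≠ 0) :
    {p : K | ¬ IsCtrb (fromBlocks F 0 (p • (b * h)) (A - p • (b * c)))
      (fromRows g (0 : Matrix σ κ K))}.encard ≤ Fintype.card ι := by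
  let φ := algebraMap K (AlgebraicClosure K)
  have hφ : Function.Injective φ := φ.injective
  have hh_map : h.map φ ≠ 0 := fun h0 =>
    hh (Matrix.map_injective hφ (h0.trans (Matrix.map_zero φ φ.map_zero).symm))
  rw [← hφ.encard_image]
  refine (Set.encard_le_encard ?_).trans
    (encard_setOf_not_isCtrb_cascadeMat_le (isCtrb_map_algebraMap_iff.2 hFg)
      (isCtrb_map_algebraMap_iff.2 hAb) hAc.map_algebraMap hh_map)
  rintro _ ⟨p, hp, rfl⟩ hctrb
  refine hp (isCtrb_map_algebraMap_iff (L := AlgebraicClosure K).1 ?_)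
  rwa [fromRows_map, Matrix.map_zero _ (map_zero _), ← cascadeMat, cascadeMat_map_algebraMap]

/-- induction step in the proof of Theorem 1 of the paper. If `(F, g)` is
controllable, `(A, b)` is controllable, `(A, c)` is observable, and `h ≠ 0`, then some single
coupling weight `p` renders the cascaded pair
`([[F, 0], [p b h, A - p b c]], [g; 0])` controllable. -/
theorem stmt12 {m n : ℕ}
    (F : Matrix (Fin m) (Fin m) ℝ) (g : Matrix (Fin m) (Fin 1) ℝ)
    (A : Matrix (Fin n) (Fin n) ℝ) (b : Matrix (Fin n) (Fin 1) ℝ) (c : Matrix (Fin 1) (Fin n) ℝ)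
    (h : Matrix (Fin 1) (Fin m) ℝ)
    (hFg : IsCtrb F g) (hAb : IsCtrb A b) (hAc : IsObsv A c) (hh : h ≠ 0) :
    ∃ p : ℝ,
      IsCtrb (Matrix.fromBlocks F 0 (p • (b * h)) (A - p • (b * c)))
        (Matrix.fromRows g (0 : Matrix (Fin n) (Fin 1) ℝ)) := by
  have hfin := Set.finite_of_encard_le_coe (stmt12_general F g A b c h hFg hAb hAc hh)
  simpa [Set.Nonempty] using hfin.infinite_compl.nonempty
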